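/- Let d, m ≥ 1 and r ≥ 0. Let E_1,…,E_m be nonzero idempotent d × d matrices with nonnegative integer entries, and let N_1,…,N_r be d × d matrices with nonnegative integer entries satisfying N_t² = 0 for all t. Suppose that X := E_1 + ⋯ + E_m + N_1 + ⋯ + N_r has every entry strictly positive and satisfies X² = mX. Then each E_s has exactly one diagonal entry equal to 1 and all its other diagonal entries equal to 0; moreover, if E_s and E_{s′} have their unit diagonal entry in the same position, then E_s E_{s′} ≠ 0. -/

import Mathlib

open Matrix

/-!
An idempotent matrix over a field of characteristic zero has trace equal to its rank, so each `E s`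
has trace at least `1`. A positive matrix `X` with `X * X = c • X` has rank one, because its columns
are positive eigenvectors for the same eigenvalue, and hence `X.trace = c`. With `c = m` the number
of idempotents, `m ≤ ∑ s, (E s).trace ≤ X.trace = m` forces `(E s).trace = 1` for every `s`.
-/

section PositiveMatrix

variable {n K : Type*} [Fintype n] [Field K] [LinearOrder K] [IsStrictOrderedRing K]
  {A : Matrix n n K} {c : K}

theorem eq_zero_of_mulVec_apply_eq_zero {i : n} {w : n → K} (hA : ∀ j, 0 < A i j)
    (hw : ∀ j, 0 ≤ w j) (h : (A *ᵥ w) i = 0) : w = 0 := by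
  have hterm : ∀ j ∈ Finset.univ, A i j * w j = 0 :=
    (Finset.sum_eq_zero_iff_of_nonneg fun j _ => mul_nonneg (hA j).le (hw j)).mp h
  ext j
  exact (mul_eq_zero.mp (hterm j (Finset.mem_univ j))).resolve_left (hA j).ne'

/-- Subtracting from `v` the largest multiple of `u` that leaves a nonnegative vector gives an
eigenvector with a vanishing entry. -/
theorem exists_eq_smul_of_mulVec_eq_smul {u v : n → K} (hA : ∀ i j, 0 < A i j)
    (hu : ∀ i, 0 < u i) (hAu : A *ᵥ u = c • u) (hAv : A *ᵥ v = c • v) : ∃ t : K, v = t • u := by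
  cases isEmpty_or_nonempty n
  · exact ⟨0, Subsingleton.elim _ _⟩
  obtain ⟨i, hi⟩ := Finite.exists_min fun j => v j / u j
  let t := v i / u i
  have hnonneg (j : n) : 0 ≤ (v - t • u) j :=
    sub_nonneg.mpr ((le_div_iff₀ (hu j)).mp (hi j))
  have hzero : (v - t • u) i = 0 :=
    sub_eq_zero.mpr (div_mul_cancel₀ (v i) (hu i).ne').symm
  have heigen : A *ᵥ (v - t • u) = c • (v - t • u) := by
    rw [mulVec_sub, mulVec_smul, hAu, hAv, smul_sub, smul_comm]
  refine ⟨t, sub_eq_zero.mp (eq_zero_of_mulVec_apply_eq_zero (hA i) hnonneg ?_)⟩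
  rw [heigen, Pi.smul_apply, hzero, smul_zero]

theorem exists_eq_vecMulVec_of_mul_self_eq_smul (hA : ∀ i j, 0 < A i j) (hAA : A * A = c • A) :
    ∃ u w : n → K, A = vecMulVec u w := by
  cases isEmpty_or_nonempty n
  · exact ⟨0, 0, Subsingleton.elim _ _⟩
  have hcol (j : n) : A *ᵥ A.col j = c • A.col j := funext fun i => congrFun₂ hAA i j
  let b := Classical.arbitrary n
  choose w hw using fun j =>
    exists_eq_smul_of_mulVec_eq_smul hA (fun i => hA i b) (hcol b) (hcol j)
  refine ⟨A.col b, w, ?_⟩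
  ext i j
  exact (congrFun (hw j) i).trans (mul_comm _ _)

theorem trace_eq_of_mul_self_eq_smul [Nonempty n] (hA : ∀ i j, 0 < A i j)
    (hAA : A * A = c • A) : A.trace = c := by
  obtain ⟨u, w, rfl⟩ := exists_eq_vecMulVec_of_mul_self_eq_smul hA hAA
  rw [vecMulVec_mul_vecMulVec, vecMulVec_smul] at hAA
  let i := Classical.arbitrary n
  rw [trace_vecMulVec, dotProduct_comm]
  exact mul_right_cancel₀ (hA i i).ne' (congrFun₂ hAA i i)

end PositiveMatrix

theorem trace_eq_zero_iff_of_isIdempotentElem {n K : Type*} [Fintype n] [Field K] [CharZero K]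
    {A : Matrix n n K} (hA : IsIdempotentElem A) : A.trace = 0 ↔ A = 0 := by
  classical
  have hlin : IsIdempotentElem (toLin' A) := by
    rw [IsIdempotentElem, Module.End.mul_eq_comp, ← toLin'_mul, hA.eq]
  rw [← trace_toLin'_eq, LinearMap.IsIdempotentElem.trace_eq_zero_iff hlin,
    LinearEquiv.map_eq_zero_iff]

section NatMatrix

variable {n : Type*} [Fintype n] {A : Matrix n n ℕ}

theorem natCast_trace (A : Matrix n n ℕ) (K : Type*) [NonAssocSemiring K] :
    (A.trace : K) = (A.map (Nat.castRingHom K)).trace :=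
  AddMonoidHom.map_trace (Nat.castRingHom K) A

theorem one_le_trace_of_isIdempotentElem (hA : IsIdempotentElem A) (hne : A ≠ 0) :
    1 ≤ A.trace := by
  have hcast : IsIdempotentElem (A.map (Nat.castRingHom ℚ)) := by
    rw [IsIdempotentElem, ← Matrix.map_mul, hA.eq]
  rw [Nat.one_le_iff_ne_zero, ← Nat.cast_ne_zero (R := ℚ), natCast_trace, Ne,
    trace_eq_zero_iff_of_isIdempotentElem hcast]
  contrapose! hne
  ext i j
  exact Nat.cast_eq_zero.mp (congrFun₂ hne i j)

theorem nat_trace_eq_of_mul_self_eq_smul [Nonempty n] {c : ℕ} (hA : ∀ i j, 0 < A i j)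
    (hAA : A * A = c • A) : A.trace = c := by
  refine Nat.cast_injective (R := ℚ) ?_
  rw [natCast_trace]
  refine trace_eq_of_mul_self_eq_smul (fun i j => Nat.cast_pos.mpr (hA i j)) ?_
  rw [← Matrix.map_mul, hAA]
  ext i j
  simp

theorem trace_eq_one_of_mul_self_eq_card_smul {ι : Type*} [Fintype ι] {E : ι → Matrix n n ℕ}
    {R X : Matrix n n ℕ} (hne : ∀ s, E s ≠ 0) (hidem : ∀ s, IsIdempotentElem (E s))
    (hX : X = (∑ s, E s) + R) (hpos : ∀ i j, 0 < X i j) (hXX : X * X = Fintype.card ι • X)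
    (s : ι) : (E s).trace = 1 := by
  have : Nonempty n := not_isEmpty_iff.mp fun _ => hne s (Subsingleton.elim _ _)
  have hge : ∀ s ∈ Finset.univ, 1 ≤ (E s).trace :=
    fun s _ => one_le_trace_of_isIdempotentElem (hidem s) (hne s)
  have hle : ∑ s, (E s).trace ≤ ∑ _s : ι, 1 := calc
    ∑ s, (E s).trace ≤ (∑ s, (E s).trace) + R.trace := Nat.le_add_right _ _
    _ = X.trace := by rw [hX, trace_add, trace_sum]
    _ = Fintype.card ι := nat_trace_eq_of_mul_self_eq_smul hpos hXX
    _ = ∑ _s : ι, 1 := Fintype.card_eq_sum_ones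
  have heq := (Finset.sum_eq_sum_iff_of_le hge).mp (le_antisymm (Finset.sum_le_sum hge) hle)
  exact (heq s (Finset.mem_univ s)).symm

end NatMatrix

theorem exists_eq_one_of_sum_eq_one {α : Type*} [Fintype α] {f : α → ℕ} (h : ∑ i, f i = 1) :
    ∃ i, f i = 1 ∧ ∀ j, j ≠ i → f j = 0 := by
  classical
  obtain ⟨i, hi⟩ := (Finsupp.sum_eq_one_iff (Finsupp.equivFunOnFinite.symm f)).mp <| by
    rwa [Finsupp.sum_fintype _ _ fun _ => rfl]
  have hf (j : α) : f j = Finsupp.single i 1 j := DFunLike.congr_fun hi j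
  exact ⟨i, by rw [hf, Finsupp.single_eq_same], fun j hj => by rw [hf, Finsupp.single_eq_of_ne hj]⟩

theorem mul_ne_zero_of_apply_ne_zero {l m n R : Type*} [Fintype m] [NonUnitalNonAssocSemiring R]
    [PartialOrder R] [CanonicallyOrderedAdd R] [NoZeroDivisors R] {A : Matrix l m R}
    {B : Matrix m n R} {i : l} {j : m} {k : n} (hA : A i j ≠ 0) (hB : B j k ≠ 0) : A * B ≠ 0 :=
  fun h => mul_ne_zero hA hB (Finset.sum_eq_zero_iff.mp (congrFun₂ h i k) j (Finset.mem_univ j))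

theorem stmt_8_general {n ι : Type*} [Fintype n] [Fintype ι] {E : ι → Matrix n n ℕ}
    {R X : Matrix n n ℕ} (hEne : ∀ s, E s ≠ 0) (hEidem : ∀ s, IsIdempotentElem (E s))
    (hX : X = (∑ s, E s) + R) (hpos : ∀ i j, 0 < X i j) (hXX : X * X = Fintype.card ι • X) :
    (∀ s, ∃ i, E s i i = 1 ∧ ∀ j, j ≠ i → E s j j = 0) ∧
    (∀ s s' i, E s i i = 1 → E s' i i = 1 → E s * E s' ≠ 0) :=
  ⟨fun s => exists_eq_one_of_sum_eq_one
      (trace_eq_one_of_mul_self_eq_card_smul hEne hEidem hX hpos hXX s),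
    fun _ _ _ h h' => mul_ne_zero_of_apply_ne_zero (ne_zero_of_eq_one h) (ne_zero_of_eq_one h')⟩

/-- if `E 1, …, E m` are nonzero idempotent `d × d` matrices with nonnegative
integer entries, `N 1, …, N r` are square-zero `d × d` matrices with nonnegative integer
entries, and `X = ∑ E s + ∑ N t` has strictly positive entries and satisfies `X² = m • X`,
then each `E s` has exactly one diagonal entry equal to `1` (all other diagonal entries `0`),
and whenever `E s`, `E s'` have their unit diagonal entry in the same position,
`E s * E s' ≠ 0`. -/
theorem stmt_8 (d m r : ℕ) (hd : 1 ≤ d) (hm : 1 ≤ m)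
    (E : Fin m → Matrix (Fin d) (Fin d) ℕ)
    (hEne : ∀ s, E s ≠ 0)
    (hEidem : ∀ s, E s * E s = E s)
    (N : Fin r → Matrix (Fin d) (Fin d) ℕ)
    (hNsq : ∀ t, N t * N t = 0)
    (X : Matrix (Fin d) (Fin d) ℕ)
    (hX : X = (∑ s, E s) + ∑ t, N t)
    (hpos : ∀ i j, 0 < X i j)
    (hXX : X * X = m • X) :
    (∀ s, ∃ i, E s i i = 1 ∧ ∀ j, j ≠ i → E s j j = 0) ∧
    (∀ s s' i, E s i i = 1 → E s' i i = 1 → E s * E s' ≠ 0) :=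
  stmt_8_general hEne hEidem hX hpos (by rwa [Fintype.card_fin])
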